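/- There exists a family (μ_λ)_{λ ∈ (0,1]} of Borel probability measures on ℝ, each non-atomic, such that whenever 0 < ν < λ ≤ 1 there is a sequence (t_n) of real numbers with μ̂_ν(t_n) → 1 but μ̂_λ(t_n) not converging to 1. Consequently, the topologies τ(μ_λ) on ℝ (the weakest topologies making t ↦ multiplication by e^{2πitx} on L²(ℝ, μ_λ) strongly continuous) are pairwise non-equivalent, giving a continuum of mutually non-equivalent such topologies arising from non-atomic measures. -/

import Mathlib

/-!
The measures are laws of random series `X_S = ∑_{k ∈ S} ω_{k²} 4^{-k²}`, where the `ω_m` are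
independent fair bits and `S` is an infinite set of natural numbers.

* `X_S` determines the bits `ω_{k²}`, `k ∈ S`, so its law has no atoms
  (`sparseMeasure_singleton`).
* At the frequency `t = 4^{k²} / 2` every term of `t X_S` of index less than `k` is an integer, the
  term of index `k` is `0` or `1/2`, and, because the squares have growing gaps, the later
  terms sum to at most `4^{-k}` (`exists_int_add_half_add_small`). Hence the Fourier transform of
  the law at `t` is within `2π 4^{-k}` of `1` if `k ∉ S`, and of `0` (the mean of a fair sign) if
  `k ∈ S` (`norm_charFn_sparseMeasure_sub_le`).

So it suffices to have infinite sets `S_l` of naturals with `S_l \ S_ν` infinite whenever `ν < l`;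
with an enumeration `q` of the rationals, `S_l = {k | q k < l}` will do.
-/

open MeasureTheory Filter

/-- The Fourier transform (characteristic function, with the `2π` convention) of a Borel
measure `μ` on `ℝ`: `μ̂(t) = ∫ e^{2πitx} dμ(x)`. -/
noncomputable def charFn (μ : Measure ℝ) (t : ℝ) : ℂ :=
  ∫ x, Complex.exp (2 * Real.pi * Complex.I * t * x) ∂μ

/-- The fair coin. -/
noncomputable def coin : Measure Bool := (PMF.uniformOfFintype Bool).toMeasure

instance : IsProbabilityMeasure coin := by unfold coin; infer_instance

/-- The law of a sequence of independent fair bits. -/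
noncomputable def coinSeq : Measure (ℕ → Bool) := Measure.infinitePi fun _ => coin

instance : IsProbabilityMeasure coinSeq := by unfold coinSeq; infer_instance

open Classical in
/-- The bit sequence `ω` with every bit outside the positions `k²`, `k ∈ S`, replaced by `0`. -/
noncomputable def sparseDigits (S : Set ℕ) (ω : ℕ → Bool) (m : ℕ) : Bool :=
  ω m && decide (∃ k ∈ S, m = k ^ 2)

/-- The sum `∑_{k ∈ S} ω_{k²} 4^{-k²}`. -/
noncomputable def sparseSum (S : Set ℕ) (ω : ℕ → Bool) : ℝ :=
  Cardinal.cantorFunction (1 / 4) (sparseDigits S ω)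

/-- The law of `∑_{k ∈ S} ω_{k²} 4^{-k²}` for independent fair bits `ω`. -/
noncomputable def sparseMeasure (S : Set ℕ) : Measure ℝ := coinSeq.map (sparseSum S)

lemma measurable_sparseSum (S : Set ℕ) : Measurable (sparseSum S) := by
  apply Continuous.measurable
  unfold sparseSum Cardinal.cantorFunction
  refine continuous_tsum (u := fun n : ℕ => (1 / 4 : ℝ) ^ n) (fun n => ?_)
    (summable_geometric_of_lt_one (by norm_num) (by norm_num)) (fun n ω => ?_)
  · have h : Continuous fun b : Bool =>
        (cond (b && @decide (∃ k ∈ S, n = k ^ 2) (Classical.propDecidable _))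
          ((1 / 4 : ℝ) ^ n) 0) := continuous_of_discreteTopology
    exact h.comp (continuous_apply n)
  · unfold Cardinal.cantorFunctionAux
    cases sparseDigits S ω n <;> simp

instance (S : Set ℕ) : IsProbabilityMeasure (sparseMeasure S) :=
  Measure.isProbabilityMeasure_map (measurable_sparseSum S).aemeasurable

lemma coin_singleton (b : Bool) : coin {b} = 2⁻¹ := by
  unfold coin
  rw [PMF.toMeasure_apply_singleton _ _ (measurableSet_singleton _)]
  simp

lemma sparseMeasure_singleton {S : Set ℕ} (hS : S.Infinite) (x : ℝ) :
    sparseMeasure S {x} = 0 := by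
  unfold sparseMeasure
  rw [Measure.map_apply (measurable_sparseSum S) (measurableSet_singleton x)]
  rcases (sparseSum S ⁻¹' {x}).eq_empty_or_nonempty with h | ⟨ω₀, h₀⟩
  · simp [h]
  -- The fibre through `ω₀` lies in a box that fixes `N` bits, for every `N`.
  have key : ∀ N : ℕ, coinSeq (sparseSum S ⁻¹' {x}) ≤ 2⁻¹ ^ N := by
    intro N
    obtain ⟨F, hF, hN⟩ := hS.exists_subset_card_eq N
    have hsub : sparseSum S ⁻¹' {x} ⊆
        Set.pi ((F.image (fun k => k ^ 2) : Finset ℕ) : Set ℕ) (fun m => {ω₀ m}) := by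
      intro ω hω m hm
      obtain ⟨k, hk, rfl⟩ := Finset.mem_image.1 (Finset.mem_coe.1 hm)
      have h1 : sparseDigits S ω = sparseDigits S ω₀ :=
        Cardinal.cantorFunction_injective (by norm_num) (by norm_num)
          ((show sparseSum S ω = x from hω).trans (show sparseSum S ω₀ = x from h₀).symm)
      rw [Set.mem_singleton_iff]
      have h2 := congrFun h1 (k ^ 2)
      have h3 : ∃ j ∈ S, k ^ 2 = j ^ 2 := ⟨k, hF hk, rfl⟩
      simpa only [sparseDigits, h3, decide_true, Bool.and_true] using h2
    refine (measure_mono hsub).trans ?_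
    unfold coinSeq
    rw [Measure.infinitePi_pi _ (fun _ _ => measurableSet_singleton _)]
    simp only [coin_singleton, Finset.prod_const]
    rw [Finset.card_image_of_injective _ (Nat.pow_left_injective (by norm_num)), hN]
  exact le_antisymm (ge_of_tendsto' (ENNReal.tendsto_pow_atTop_nhds_zero_of_lt_one
    (by simp)) key) zero_le

/-- If the digits of a base-4 expansion vanish strictly between the positions `k²` and `(k+1)²`,
then multiplying it by `4^{k²} / 2` gives an integer, plus half the digit at `k²`, plus a small
error. -/
lemma exists_int_add_half_add_small (x : ℕ → Bool) (k : ℕ)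
    (hx : ∀ m, k ^ 2 < m → m < (k + 1) ^ 2 → x m = false) :
    ∃ N : ℤ, ∃ r : ℝ, 0 ≤ r ∧ r ≤ (1 / 4) ^ k ∧
      4 ^ (k ^ 2) / 2 * Cardinal.cantorFunction (1 / 4) x =
        N + cond (x (k ^ 2)) (1 / 2) 0 + r := by
  have hsum := Cardinal.summable_cantor_function x (c := 1 / 4) (by norm_num) (by norm_num)
  set n := k ^ 2 with hn
  refine ⟨∑ m ∈ Finset.range n, cond (x m) (2 * 4 ^ (n - m - 1)) 0,
    4 ^ n / 2 * ∑' j, Cardinal.cantorFunctionAux (1 / 4) x (j + (n + 1)), ?_, ?_, ?_⟩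
  · exact mul_nonneg (by positivity)
      (tsum_nonneg fun j => Cardinal.cantorFunctionAux_nonneg (by norm_num))
  · rw [← tsum_mul_left]
    have hs1 : Summable fun j => (4 : ℝ) ^ n / 2 *
        Cardinal.cantorFunctionAux (1 / 4) x (j + (n + 1)) :=
      ((summable_nat_add_iff (n + 1)).2 hsum).mul_left _
    have hs2 : Summable fun j : ℕ => (1 / 4 : ℝ) ^ k / 2 * (1 / 2) ^ j :=
      (summable_geometric_of_lt_one (by norm_num) (by norm_num)).mul_left _
    have hle : ∀ j, (4 : ℝ) ^ n / 2 * Cardinal.cantorFunctionAux (1 / 4) x (j + (n + 1)) ≤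
        (1 / 4 : ℝ) ^ k / 2 * (1 / 2) ^ j := by
      intro j
      cases hj : x (j + (n + 1)) with
      | false => rw [Cardinal.cantorFunctionAux_false hj]; simp
      | true =>
        rw [Cardinal.cantorFunctionAux_true hj]
        -- A nonzero digit beyond `k²` sits at or beyond `(k+1)² = k² + 2k + 1`.
        have hjk : 2 * k ≤ j := by
          by_contra hlt
          have := hx (j + (n + 1)) (by omega) (by rw [hn]; nlinarith)
          simp [hj] at this
        have e1 : (4 : ℝ) ^ n / 2 * (1 / 4) ^ (j + (n + 1)) = (1 / 2) ^ j * (1 / 2) ^ j / 8 := by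
          rw [pow_add, pow_add, ← mul_pow, div_mul_eq_mul_div,
            show (4 : ℝ) ^ n * ((1 / 4) ^ j * ((1 / 4) ^ n * (1 / 4) ^ 1)) =
              (4 ^ n * (1 / 4) ^ n) * ((1 / 4) ^ j * (1 / 4)) by ring, ← mul_pow]
          norm_num
          ring
        have e2 : (1 / 2 : ℝ) ^ j ≤ (1 / 4) ^ k := by
          calc (1 / 2 : ℝ) ^ j ≤ (1 / 2) ^ (2 * k) :=
                pow_le_pow_of_le_one (by norm_num) (by norm_num) hjk
            _ = (1 / 4) ^ k := by rw [pow_mul]; norm_num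
        rw [e1]
        have h0 : (0 : ℝ) ≤ (1 / 2) ^ j := by positivity
        have h1 : (0 : ℝ) ≤ (1 / 4) ^ k := by positivity
        nlinarith [mul_le_mul_of_nonneg_right e2 h0]
    refine (hs1.tsum_le_tsum hle hs2).trans (le_of_eq ?_)
    rw [tsum_mul_left, tsum_geometric_of_lt_one (by norm_num) (by norm_num)]
    ring
  · unfold Cardinal.cantorFunction
    rw [← hsum.sum_add_tsum_nat_add (n + 1), mul_add, Finset.sum_range_succ, mul_add]
    congr 2
    · rw [Finset.mul_sum]
      push_cast
      refine Finset.sum_congr rfl fun m hm => ?_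
      have hm := Finset.mem_range.1 hm
      cases h : x m with
      | false => simp [h]
      | true =>
        rw [Cardinal.cantorFunctionAux_true h]
        obtain ⟨d, hd⟩ : ∃ d, n = m + 1 + d := ⟨n - m - 1, by omega⟩
        have : n - m - 1 = d := by omega
        rw [this, hd, pow_add, pow_add, one_div, inv_pow]
        simp only [cond_true]
        push_cast
        field_simp
        norm_num
    · cases h : x n with
      | false => simp [h]
      | true =>
        rw [Cardinal.cantorFunctionAux_true h, one_div, inv_pow]
        simp only [cond_true]
        field_simp

lemma norm_exp_sub_sign_le (N : ℤ) (b : Bool) {r : ℝ} (hr : 0 ≤ r) :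
    ‖Complex.exp (2 * Real.pi * Complex.I * ((N + cond b (1 / 2) 0 + r : ℝ) : ℂ)) -
      (cond b (-1) 1 : ℂ)‖ ≤ 2 * Real.pi * r := by
  have h1 : Complex.exp (2 * Real.pi * Complex.I * ((N + cond b (1 / 2) 0 + r : ℝ) : ℂ)) =
      (cond b (-1) 1 : ℂ) * Complex.exp (Complex.I * ((2 * Real.pi * r : ℝ) : ℂ)) := by
    have h2 : Complex.exp (2 * Real.pi * Complex.I * ((cond b (1 / 2) 0 : ℝ) : ℂ)) =
        (cond b (-1) 1 : ℂ) := by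
      cases b with
      | false => simp
      | true =>
        simp only [cond_true]
        rw [← Complex.exp_pi_mul_I]
        congr 1
        push_cast
        ring
    rw [← h2, ← Complex.exp_add, ← one_mul (Complex.exp (_ + _)),
      ← Complex.exp_int_mul_two_pi_mul_I N, ← Complex.exp_add]
    congr 1
    push_cast
    ring
  rw [h1, ← mul_sub_one, norm_mul]
  have h3 : ‖(cond b (-1) 1 : ℂ)‖ = 1 := by cases b <;> simp
  rw [h3, one_mul]
  refine Real.norm_exp_I_mul_ofReal_sub_one_le.trans (le_of_eq ?_)
  rw [Real.norm_eq_abs, abs_of_nonneg (by positivity)]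

lemma integral_coin_sign (n : ℕ) :
    ∫ ω, (cond (ω n) (-1) 1 : ℂ) ∂coinSeq = 0 := by
  have h := measurePreserving_eval_infinitePi (fun _ : ℕ => coin) n
  have h2 := integral_map (μ := coinSeq) (φ := fun ω : ℕ → Bool => ω n)
    (f := fun b : Bool => (cond b (-1) 1 : ℂ)) (measurable_pi_apply n).aemeasurable
    (measurable_of_finite _).aestronglyMeasurable
  rw [← h2]
  have h3 : Measure.map (fun ω : ℕ → Bool => ω n) coinSeq = coin := h.map_eq
  rw [h3]
  unfold coin
  rw [PMF.integral_eq_sum]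
  simp

open Classical in
/-- At the frequency `4^{k²} / 2` the Fourier transform detects whether `k ∈ S`. -/
lemma norm_charFn_sparseMeasure_sub_le (S : Set ℕ) (k : ℕ) :
    ‖charFn (sparseMeasure S) (4 ^ (k ^ 2) / 2) - (if k ∈ S then 0 else 1)‖ ≤
      2 * Real.pi * (1 / 4) ^ k := by
  have hmeas : Measurable fun x : ℝ =>
      Complex.exp (2 * Real.pi * Complex.I * ((4 ^ (k ^ 2) / 2 : ℝ) : ℂ) * x) := by fun_prop
  have hpt : ∀ ω, ‖Complex.exp (2 * Real.pi * Complex.I * ((4 ^ (k ^ 2) / 2 : ℝ) : ℂ) *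
        (sparseSum S ω : ℝ)) - (cond (sparseDigits S ω (k ^ 2)) (-1) 1 : ℂ)‖ ≤
      2 * Real.pi * (1 / 4) ^ k := by
    intro ω
    obtain ⟨N, r, hr0, hr, he⟩ := exists_int_add_half_add_small (sparseDigits S ω) k (by
      intro m h1 h2
      have : ¬ ∃ j ∈ S, m = j ^ 2 := by
        rintro ⟨j, -, rfl⟩
        have h3 := lt_of_pow_lt_pow_left₀ 2 (Nat.zero_le _) h1
        have h4 := lt_of_pow_lt_pow_left₀ 2 (Nat.zero_le _) h2
        omega
      simp [sparseDigits, this])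
    rw [mul_assoc _ _ ((sparseSum S ω : ℝ) : ℂ), ← Complex.ofReal_mul, sparseSum, he]
    refine (norm_exp_sub_sign_le N _ hr0).trans ?_
    gcongr
  have hint1 : Integrable (fun ω => Complex.exp (2 * Real.pi * Complex.I *
      ((4 ^ (k ^ 2) / 2 : ℝ) : ℂ) * (sparseSum S ω : ℝ))) coinSeq := by
    refine Integrable.of_bound
      (hmeas.comp (measurable_sparseSum S)).aestronglyMeasurable 1 (ae_of_all _ fun ω => ?_)
    have e : 2 * Real.pi * Complex.I * ((4 ^ (k ^ 2) / 2 : ℝ) : ℂ) * (sparseSum S ω : ℝ) =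
        ((2 * Real.pi * (4 ^ (k ^ 2) / 2) * sparseSum S ω : ℝ) : ℂ) * Complex.I := by
      push_cast
      ring
    rw [e, Complex.norm_exp_ofReal_mul_I]
  have hmeasD : Measurable fun ω : ℕ → Bool =>
      (cond (sparseDigits S ω (k ^ 2)) (-1) 1 : ℂ) :=
    (measurable_of_finite fun b : Bool =>
      (cond (b && decide (∃ j ∈ S, k ^ 2 = j ^ 2)) (-1) 1 : ℂ)).comp (measurable_pi_apply (k ^ 2))
  have hint2 : Integrable (fun ω => (cond (sparseDigits S ω (k ^ 2)) (-1) 1 : ℂ)) coinSeq :=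
    Integrable.of_bound hmeasD.aestronglyMeasurable 1 (ae_of_all _ fun ω => by
      cases sparseDigits S ω (k ^ 2) <;> simp)
  have hmain : ∫ ω, (cond (sparseDigits S ω (k ^ 2)) (-1) 1 : ℂ) ∂coinSeq =
      if k ∈ S then 0 else 1 := by
    have hiff : (∃ j ∈ S, k ^ 2 = j ^ 2) ↔ k ∈ S := by
      constructor
      · rintro ⟨j, hj, h⟩
        rwa [Nat.pow_left_injective (n := 2) (by norm_num) h]
      · exact fun h => ⟨k, h, rfl⟩
    simp only [sparseDigits, hiff]
    by_cases h : k ∈ S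
    · simp only [h, decide_true, Bool.and_true, if_true]
      exact integral_coin_sign _
    · simp [h]
  have hcf : charFn (sparseMeasure S) (4 ^ (k ^ 2) / 2) =
      ∫ ω, Complex.exp (2 * Real.pi * Complex.I * ((4 ^ (k ^ 2) / 2 : ℝ) : ℂ) *
        (sparseSum S ω : ℝ)) ∂coinSeq :=
    integral_map (measurable_sparseSum S).aemeasurable hmeas.aestronglyMeasurable
  rw [hcf, ← hmain, ← integral_sub hint1 hint2]
  simpa using norm_integral_le_of_norm_le_const (μ := coinSeq) (ae_of_all _ hpt)

/-- If `S_l \ S_ν` is infinite, the frequencies `4^{k²} / 2` for `k` in it separate the two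
measures. -/
lemma exists_separating_sequence {A B : Set ℕ} (h : (B \ A).Infinite) :
    ∃ t : ℕ → ℝ,
      Tendsto (fun n => charFn (sparseMeasure A) (t n)) atTop (nhds 1) ∧
      ¬ Tendsto (fun n => charFn (sparseMeasure B) (t n)) atTop (nhds 1) := by
  classical
  obtain ⟨φ, hφ, hmem⟩ :=
    extraction_of_frequently_atTop (Nat.frequently_atTop_iff_infinite.2 h)
  have hlim : Tendsto (fun n => 2 * Real.pi * (1 / 4 : ℝ) ^ φ n) atTop (nhds 0) := by
    have := (tendsto_pow_atTop_nhds_zero_of_lt_one (r := (1 / 4 : ℝ)) (by norm_num)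
      (by norm_num)).comp hφ.tendsto_atTop
    simpa using this.const_mul (2 * Real.pi)
  refine ⟨fun n => 4 ^ (φ n ^ 2) / 2, ?_, fun hB => ?_⟩
  · rw [tendsto_iff_norm_sub_tendsto_zero]
    refine squeeze_zero (fun _ => norm_nonneg _) (fun n => ?_) hlim
    simpa [(hmem n).2] using norm_charFn_sparseMeasure_sub_le A (φ n)
  · have h0 : Tendsto (fun n => charFn (sparseMeasure B) (4 ^ (φ n ^ 2) / 2)) atTop
        (nhds 0) := by
      rw [tendsto_iff_norm_sub_tendsto_zero]
      refine squeeze_zero (fun _ => norm_nonneg _) (fun n => ?_) hlim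
      simpa [(hmem n).1] using norm_charFn_sparseMeasure_sub_le B (φ n)
    exact one_ne_zero (tendsto_nhds_unique hB h0)

/-- Infinitely many indices of an enumeration of `ℚ` give rationals in a given real interval. -/
lemma infinite_rat_index {a b : ℝ} (hab : a < b) :
    {k : ℕ | a ≤ ((Denumerable.eqv ℚ).symm k : ℝ) ∧ ((Denumerable.eqv ℚ).symm k : ℝ) < b}.Infinite := by
  obtain ⟨p, hp1, hp2⟩ := exists_rat_btwn hab
  obtain ⟨q, hq1, hq2⟩ := exists_rat_btwn hp2
  have hinf : (Set.Ioo p q).Infinite := Set.Ioo_infinite (by exact_mod_cast hq1)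
  refine (hinf.image (f := Denumerable.eqv ℚ) (Denumerable.eqv ℚ).injective.injOn).mono ?_
  rintro _ ⟨x, ⟨h1, h2⟩, rfl⟩
  rw [Set.mem_ofPred_eq, Equiv.symm_apply_apply]
  have h1' : (p : ℝ) < x := by exact_mod_cast h1
  have h2' : (x : ℝ) < q := by exact_mod_cast h2
  constructor <;> linarith

/-- There is a family `(μ l)_{l ∈ (0,1]}` of non-atomic Borel probability
measures on `ℝ` such that whenever `0 < ν < l ≤ 1` there is a sequence `(t n)` of reals with
`μ̂_ν (t n) → 1` but `μ̂_l (t n)` not converging to `1`.  (Consequently the topologies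
`τ (μ l)` on `ℝ` — the weakest topologies making `t ↦` multiplication by `e^{2πitx}` on
`L² (ℝ, μ l)` strongly continuous, in which `t n → 0` iff `μ̂_l (t n) → 1` — are pairwise
non-equivalent, giving a continuum of such topologies arising from non-atomic measures.) -/
theorem continuum_of_nonatomic_measures_with_inequivalent_topologies :
    ∃ μ : ℝ → Measure ℝ,
      (∀ l : ℝ, 0 < l → l ≤ 1 → IsProbabilityMeasure (μ l)) ∧
      (∀ l : ℝ, 0 < l → l ≤ 1 → ∀ x : ℝ, μ l {x} = 0) ∧
      (∀ ν l : ℝ, 0 < ν → ν < l → l ≤ 1 →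
        ∃ t : ℕ → ℝ,
          Tendsto (fun n => charFn (μ ν) (t n)) atTop (nhds 1) ∧
          ¬ Tendsto (fun n => charFn (μ l) (t n)) atTop (nhds 1)) := by
  refine ⟨fun l => sparseMeasure {k | ((Denumerable.eqv ℚ).symm k : ℝ) < l},
    fun l _ _ => inferInstance, fun l _ _ => ?_, fun ν l _ hνl _ => ?_⟩
  · exact sparseMeasure_singleton
      ((infinite_rat_index (sub_one_lt l)).mono fun k hk => hk.2)
  · refine exists_separating_sequence ((infinite_rat_index hνl).mono fun k hk => ?_)
    exact ⟨hk.2, not_lt.2 hk.1⟩
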